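/- Let Ω ⊂ ℝ^m be a bounded open box and let g : ℝ^m → ℝ be infinitely differentiable such that the level set S := g⁻¹(0) is nonempty, compact, contained in Ω, and satisfies ∇g(x) ≠ 0 for all x ∈ S. Let U be an open neighborhood of S and f : U → ℝ an infinitely differentiable function. Then there exists an infinitely differentiable function f̃ : ℝ^m → ℝ whose support is compact and contained in Ω, such that f̃(x) = f(x) for all x ∈ S and ∇g(x)·∇f̃(x) = 0 for all x ∈ S. That is, f admits a smooth, compactly supported (hence periodically extendable) first-order Closest Point-like extension to the box Ω. -/

import Mathlib

open scoped BigOperators RealInnerProductSpace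

/-- any smooth function defined near a compact smooth level-set hypersurface
`S = g⁻¹(0)` contained in an open box `Ω` admits a smooth, compactly supported (in `Ω`)
first-order Closest Point-like extension: it agrees with `f` on `S` and its derivative in
the normal direction `∇g` vanishes on `S`. -/
theorem smooth_cp_like_extension_exists
    (m : ℕ) (Ω : Set (EuclideanSpace ℝ (Fin m)))
    (a b : Fin m → ℝ) (hab : ∀ i, a i < b i)
    (hΩ : Ω = {x : EuclideanSpace ℝ (Fin m) | ∀ i, x i ∈ Set.Ioo (a i) (b i)})
    (g : EuclideanSpace ℝ (Fin m) → ℝ) (hg : ContDiff ℝ (⊤ : ℕ∞) g)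
    (hSne : (g ⁻¹' {0}).Nonempty)
    (hScpt : IsCompact (g ⁻¹' {0}))
    (hSΩ : g ⁻¹' {0} ⊆ Ω)
    (hgrad : ∀ x ∈ g ⁻¹' {0}, gradient g x ≠ 0)
    (U : Set (EuclideanSpace ℝ (Fin m))) (hU : IsOpen U) (hSU : g ⁻¹' {0} ⊆ U)
    (f : EuclideanSpace ℝ (Fin m) → ℝ) (hf : ContDiffOn ℝ (⊤ : ℕ∞) f U) :
    ∃ ftil : EuclideanSpace ℝ (Fin m) → ℝ,
      ContDiff ℝ (⊤ : ℕ∞) ftil ∧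
      HasCompactSupport ftil ∧
      tsupport ftil ⊆ Ω ∧
      (∀ x ∈ g ⁻¹' {0}, ftil x = f x) ∧
      (∀ x ∈ g ⁻¹' {0}, ⟪gradient g x, gradient ftil x⟫ = (0 : ℝ)) := by
  set S := g ⁻¹' {0} with hS
  have hgr : ContDiff ℝ (⊤ : ℕ∞) (gradient g) := by
    have h1 : ContDiff ℝ (⊤ : ℕ∞) (fderiv ℝ g) := hg.fderiv_right (by simp)
    exact (InnerProductSpace.toDual ℝ (EuclideanSpace ℝ (Fin m))).symm.contDiff.comp h1
  have hΩo : IsOpen Ω := by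
    rw [hΩ]
    simp only [Set.ofPred_forall]
    refine isOpen_iInter_of_finite fun i => ?_
    exact isOpen_Ioo.preimage (f := fun x : EuclideanSpace ℝ (Fin m) => x i) (by fun_prop)
  set W : Set (EuclideanSpace ℝ (Fin m)) := (U ∩ Ω) ∩ {x | gradient g x ≠ 0} with hW
  have hWo : IsOpen W := (hU.inter hΩo).inter (isOpen_ne_fun hgr.continuous continuous_const)
  have hSW : S ⊆ W := fun x hx => ⟨⟨hSU hx, hSΩ hx⟩, hgrad x hx⟩
  obtain ⟨K, hK, hSK, hKW⟩ := exists_compact_between hScpt hWo hSW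
  obtain ⟨χ, hχ1, hχ0, -⟩ := exists_contMDiffMap_one_nhds_of_subset_interior
    (n := (⊤ : ℕ∞)) (modelWithCornersSelf ℝ (EuclideanSpace ℝ (Fin m)))
    hScpt.isClosed hSK
  have hχs : ContDiff ℝ (⊤ : ℕ∞) (χ : EuclideanSpace ℝ (Fin m) → ℝ) := χ.contMDiff.contDiff
  set q : EuclideanSpace ℝ (Fin m) → ℝ :=
    fun x => fderiv ℝ f x (gradient g x) / ⟪gradient g x, gradient g x⟫ with hq
  set h : EuclideanSpace ℝ (Fin m) → ℝ := fun x => f x - g x * q x with hh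
  have hfW : ∀ x ∈ W, ContDiffAt ℝ (⊤ : ℕ∞) f x := fun x hx =>
    hf.contDiffAt (hU.mem_nhds hx.1.1)
  have hqW : ∀ x ∈ W, ContDiffAt ℝ (⊤ : ℕ∞) q x := by
    intro x hx
    have h1 : ContDiffAt ℝ (⊤ : ℕ∞) (fderiv ℝ f) x := (hfW x hx).fderiv_right (by simp)
    exact (h1.clm_apply hgr.contDiffAt).div (hgr.contDiffAt.inner ℝ hgr.contDiffAt)
      (inner_self_ne_zero.2 hx.2)
  have hhW : ∀ x ∈ W, ContDiffAt ℝ (⊤ : ℕ∞) h x := fun x hx =>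
    (hfW x hx).sub (hg.contDiffAt.mul (hqW x hx))
  have hts : tsupport (fun x => χ x * h x) ⊆ K := by
    refine closure_minimal (fun x hx => ?_) hK.isClosed
    by_contra hxK
    exact hx (by simp [hχ0 x hxK])
  refine ⟨fun x => χ x * h x, ?_, hK.of_isClosed_subset (isClosed_tsupport _) hts,
    fun x hx => (hKW (hts hx)).1.2, ?_, ?_⟩
  · refine contDiff_iff_contDiffAt.2 fun x => ?_
    by_cases hx : x ∈ tsupport (fun x => χ x * h x)
    · exact hχs.contDiffAt.mul (hhW x (hKW (hts hx)))
    · exact (contDiffAt_const (c := (0 : ℝ))).congr_of_eventuallyEq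
        (notMem_tsupport_iff_eventuallyEq.1 hx)
  · intro x hx
    have h1 : χ x = 1 := hχ1.self_of_nhdsSet x hx
    have h2 : g x = 0 := hx
    simp [h1, hh, h2]
  · intro x hx
    have hev : (fun x => χ x * h x) =ᶠ[nhds x] h := by
      filter_upwards [hχ1.filter_mono (nhds_le_nhdsSet hx)] with y hy
      simp [hy]
    have h2 : g x = 0 := hx
    have hxW := hSW hx
    have htop : ((⊤ : ℕ∞) : WithTop ℕ∞) ≠ 0 := by simp
    have hd : HasFDerivAt h (fderiv ℝ f x - (g x • fderiv ℝ q x + q x • fderiv ℝ g x)) x :=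
      ((hfW x hxW).differentiableAt htop).hasFDerivAt.sub
        ((hg.contDiffAt.differentiableAt htop).hasFDerivAt.mul
          ((hqW x hxW).differentiableAt htop).hasFDerivAt)
    have hne : ⟪gradient g x, gradient g x⟫ ≠ (0 : ℝ) := inner_self_ne_zero.2 hxW.2
    have hgg : fderiv ℝ g x (gradient g x) = ⟪gradient g x, gradient g x⟫ := by
      conv_rhs => enter [2]; rw [gradient]
      rw [InnerProductSpace.toDual_symm_apply]
    rw [real_inner_comm]
    conv_lhs => enter [2]; rw [gradient]
    rw [InnerProductSpace.toDual_symm_apply, hev.fderiv_eq, hd.fderiv]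
    simp only [h2, zero_smul, zero_add, ContinuousLinearMap.sub_apply,
      ContinuousLinearMap.smul_apply, smul_eq_mul, hgg, hq]
    rw [div_mul_cancel₀ _ hne, sub_self]
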